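/- arXiv:1507.02901 — 4 statements merged into one kernel-verified Lean document; each statement's English description precedes it below -/
import Mathlib

section
/- Let H and 𝔏 be nonzero complex Hilbert spaces, let R be an injective quasinormal bounded operator on H, and let A be an injective positive bounded operator on 𝔏. Then every complex number λ with |λ| > m_{|R|}/‖A‖ belongs to Λ_int(R, A⊗S). -/
open ContinuousLinearMap

noncomputable section

/-- The modulus `|T| = (T*T)^(1/2)` of a bounded operator on a complex Hilbert space. -/
def modulus {H : Type*} [NormedAddCommGroup H] [InnerProductSpace ℂ H] [CompleteSpace H]
    (T : H →L[ℂ] H) : H →L[ℂ] H :=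
  CFC.sqrt (adjoint T ∘L T)

/-- A bounded operator is quasinormal if it commutes with its modulus. -/
def IsQuasinormal {H : Type*} [NormedAddCommGroup H] [InnerProductSpace ℂ H] [CompleteSpace H]
    (T : H →L[ℂ] H) : Prop :=
  T ∘L modulus T = modulus T ∘L T

/-- `m_T = inf {⟨Tx,x⟩ : ‖x‖ = 1}` (real part of the inner product). -/
def mval {H : Type*} [NormedAddCommGroup H] [InnerProductSpace ℂ H]
    (T : H →L[ℂ] H) : ℝ :=
  sInf {r : ℝ | ∃ x : H, ‖x‖ = 1 ∧ r = T.reApplyInnerSelf x}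

/-- The set of intertwining values `Λ_int(R,M)`. -/
def intertwiningValues {H K : Type*} [NormedAddCommGroup H] [InnerProductSpace ℂ H]
    [NormedAddCommGroup K] [InnerProductSpace ℂ K]
    (R : H →L[ℂ] H) (M : K →L[ℂ] K) : Set ℂ :=
  {l : ℂ | ∃ X : K →L[ℂ] H, X ≠ 0 ∧ R ∘L X = l • (X ∘L M)}

/-- The set of extended eigenvalues `σ_ext(T)`. -/
def extSpectrum {H : Type*} [NormedAddCommGroup H] [InnerProductSpace ℂ H]
    (T : H →L[ℂ] H) : Set ℂ :=
  {l : ℂ | ∃ X : H →L[ℂ] H, X ≠ 0 ∧ T ∘L X = l • (X ∘L T)}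

/-- The set `𝒜_r(R,A)` of operators `L` with `‖Rⁿ(Lx)‖ ≤ c·rⁿ·‖Aⁿx‖` for all `n, x`. -/
def calA {H 𝔏 : Type*} [NormedAddCommGroup H] [InnerProductSpace ℂ H]
    [NormedAddCommGroup 𝔏] [InnerProductSpace ℂ 𝔏]
    (r : ℝ) (R : H →L[ℂ] H) (A : 𝔏 →L[ℂ] 𝔏) : Set (𝔏 →L[ℂ] H) :=
  {L : 𝔏 →L[ℂ] H | ∃ c : ℝ, 0 ≤ c ∧
    ∀ (n : ℕ) (x : 𝔏), ‖(R ^ n) (L x)‖ ≤ c * r ^ n * ‖(A ^ n) x‖}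

/-- An operator is pure if it has no nonzero reducing subspace on which it is normal. -/
def IsPure {H : Type*} [NormedAddCommGroup H] [InnerProductSpace ℂ H] [CompleteSpace H]
    (T : H →L[ℂ] H) : Prop :=
  ∀ M : Submodule ℂ H, IsClosed (M : Set H) → (∀ x ∈ M, T x ∈ M) →
    (∀ x ∈ M, adjoint T x ∈ M) →
    (∀ x ∈ M, T (adjoint T x) = adjoint T (T x)) → M = ⊥

universe u

/-- An operator is subnormal if it has a normal extension on a larger Hilbert space. -/
def IsSubnormal {F : Type*} [NormedAddCommGroup F] [InnerProductSpace ℂ F] [CompleteSpace F]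
    (T : F →L[ℂ] F) : Prop :=
  ∃ (K : Type u) (_ : NormedAddCommGroup K) (_ : InnerProductSpace ℂ K) (_ : CompleteSpace K)
    (j : F →ₗᵢ[ℂ] K) (M : K →L[ℂ] K),
      adjoint M ∘L M = M ∘L adjoint M ∧ ∀ x : F, M (j x) = j (T x)

end

/-!
If operators `Lₙ : 𝔏 → H` satisfy `Lₙ₊₁ A = R Lₙ`, then `X x = ∑ λ⁻ⁿ Lₙ xₙ` solves
`R X = λ X (A ⊗ S)`, provided the series converges. Take `Lₙ = ⟨uₙ, ·⟩ Rⁿ v` of rank one, with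
`A* uₙ₊₁ = uₙ`. Choose `m_{|R|} < r < b |λ|` and `b < ‖A‖`. Since `‖Rⁿ v‖ = ‖|R|ⁿ v‖`, a vector
`v` in the spectral subspace of `|R|` below `r` gives `‖Rⁿ v‖ = O(rⁿ)`; since `A*A = |A|²` commutes
with `A`, a vector `u₀` in the spectral subspace of `|A|` above `b` gives `uₙ = Aⁿ |A|⁻²ⁿ u₀` with
`‖uₙ‖ = O(b⁻ⁿ)`. Hence the terms of the series are `O((r / (b |λ|))ⁿ)`. The spectral subspaces are
reached through the continuous functional calculus, by cutoff functions.
-/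

section CStarAlgebra

variable {𝒜 : Type*} [CStarAlgebra 𝒜] {a : 𝒜}

lemma cfc_ne_zero_of_mem_spectrum (ha : IsSelfAdjoint a) {f : ℝ → ℝ}
    (hf : ContinuousOn f (spectrum ℝ a)) {t : ℝ} (ht : t ∈ spectrum ℝ a)
    (hft : f t ≠ 0) : cfc f a ≠ 0 := by
  rw [← norm_pos_iff]
  exact (norm_pos_iff.2 hft).trans_le (norm_apply_le_norm_cfc f a ht hf ha)

lemma exists_ne_zero_norm_pow_mul_le (ha : IsSelfAdjoint a) {t r : ℝ}
    (ht : t ∈ spectrum ℝ a) (htr : |t| < r) : ∃ x ≠ 0, ∀ n : ℕ, ‖a ^ n * x‖ ≤ r ^ n * r := by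
  have hr : 0 ≤ r := (abs_nonneg t).trans htr.le
  let f : ℝ → ℝ := fun s => max 0 (r - |s|)
  have hf : Continuous f := by fun_prop
  have hft : f t ≠ 0 := ne_of_gt (lt_max_of_lt_right (sub_pos.2 htr))
  refine ⟨cfc f a, cfc_ne_zero_of_mem_spectrum ha hf.continuousOn ht hft, fun n => ?_⟩
  rw [← cfc_pow_id (R := ℝ) a n, ← cfc_mul (· ^ n) f a (by fun_prop) hf.continuousOn]
  refine norm_cfc_le (by positivity) fun s _ => ?_
  rw [norm_mul, norm_pow, Real.norm_eq_abs, Real.norm_of_nonneg (le_max_left _ _)]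
  rcases le_total |s| r with hs | hs
  · gcongr
    exact max_le hr (sub_le_self r (abs_nonneg s))
  · rw [max_eq_left (sub_nonpos.2 hs), mul_zero]
    positivity

/-- Here `x` is a function of `a` supported on the part of the spectrum where `|s| ≥ b`, and `y` is
a function of `a` equal to `s⁻²` there. -/
lemma exists_ne_zero_sq_mul_mul_eq_self (ha : IsSelfAdjoint a) {t b : ℝ}
    (ht : t ∈ spectrum ℝ a) (hb : 0 < b) (hbt : b < |t|) :
    ∃ x ≠ 0, ∃ y, (∀ z, Commute a z → Commute y z) ∧ a ^ 2 * y * x = x ∧ ‖a * y‖ ≤ b⁻¹ := by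
  have hmax (s : ℝ) : 0 < max |s| b := hb.trans_le (le_max_right _ _)
  let f : ℝ → ℝ := fun s => max 0 (|s| - b)
  let k : ℝ → ℝ := fun s => (max |s| b ^ 2)⁻¹
  have hf : Continuous f := by fun_prop
  have hk : Continuous k :=
    Continuous.inv₀ (by fun_prop) fun s => (pow_pos (hmax s) 2).ne'
  have hft : f t ≠ 0 := ne_of_gt (lt_max_of_lt_right (sub_pos.2 hbt))
  refine ⟨cfc f a, cfc_ne_zero_of_mem_spectrum ha hf.continuousOn ht hft, cfc k a,
    fun z hz => hz.cfc_real k, ?_, ?_⟩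
  · rw [← cfc_pow_id (R := ℝ) a 2, ← cfc_mul (· ^ 2) k a (by fun_prop) hk.continuousOn,
      ← cfc_mul (fun s => s ^ 2 * k s) f a (by fun_prop) hf.continuousOn]
    refine cfc_congr fun s _ => ?_
    rcases le_total |s| b with hs | hs
    · have hfs : f s = 0 := max_eq_left (sub_nonpos.2 hs)
      simp only [hfs, mul_zero]
    · have hs0 : s ≠ 0 := abs_pos.1 (hb.trans_le hs)
      simp only [k, max_eq_left hs, sq_abs, mul_inv_cancel₀ (pow_ne_zero 2 hs0), one_mul]
  · nth_rewrite 1 [← cfc_id' ℝ a]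
    rw [← cfc_mul (fun s => s) k a continuousOn_id hk.continuousOn]
    refine norm_cfc_le (by positivity) fun s _ => ?_
    calc ‖s * k s‖ = |s| * (max |s| b ^ 2)⁻¹ := by
          rw [norm_mul, Real.norm_eq_abs, Real.norm_of_nonneg (by positivity)]
      _ ≤ max |s| b * (max |s| b ^ 2)⁻¹ := by gcongr; exact le_max_left _ _
      _ = (max |s| b)⁻¹ := by have := (hmax s).ne'; field_simp
      _ ≤ b⁻¹ := inv_anti₀ hb (le_max_right _ _)

variable [PartialOrder 𝒜] [StarOrderedRing 𝒜]

lemma norm_cfcAbs_mul (a x : 𝒜) : ‖CFC.abs a * x‖ = ‖a * x‖ := by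
  have key : star (CFC.abs a * x) * (CFC.abs a * x) = star (a * x) * (a * x) := by
    have hsa : star (CFC.abs a) = CFC.abs a := (IsSelfAdjoint.of_nonneg (CFC.abs_nonneg a)).star_eq
    simp only [star_mul, hsa, mul_assoc]
    rw [← mul_assoc (CFC.abs a), CFC.abs_mul_abs, mul_assoc]
  rw [← mul_self_inj (norm_nonneg _) (norm_nonneg _), ← CStarRing.norm_star_mul_self, key,
    CStarRing.norm_star_mul_self]

lemma norm_cfcAbs_pow_mul (ha : Commute a (CFC.abs a)) (n : ℕ) (x : 𝒜) :
    ‖CFC.abs a ^ n * x‖ = ‖a ^ n * x‖ := by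
  induction n generalizing x with
  | zero => simp
  | succ n ih =>
    calc ‖CFC.abs a ^ (n + 1) * x‖ = ‖a ^ n * (CFC.abs a * x)‖ := by rw [pow_succ, mul_assoc, ih]
      _ = ‖CFC.abs a * (a ^ n * x)‖ := by
        rw [← mul_assoc, (ha.pow_left n).eq, mul_assoc]
      _ = ‖a ^ (n + 1) * x‖ := by rw [norm_cfcAbs_mul, pow_succ', mul_assoc]

lemma exists_ne_zero_star_mul_pow_succ_mul (ha : Commute a (CFC.abs a)) {b : ℝ} (hb : 0 < b)
    (hba : b < ‖a‖) :
    ∃ x ≠ 0, ∃ g : 𝒜, ‖g‖ ≤ b⁻¹ ∧ ∀ n : ℕ, star a * (g ^ (n + 1) * x) = g ^ n * x := by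
  have : Nontrivial 𝒜 := nontrivial_of_ne a 0 (norm_pos_iff.1 (hb.trans hba))
  have hspec : ‖a‖ ∈ spectrum ℝ (CFC.abs a) := by
    simpa only [CFC.norm_abs] using
      CStarAlgebra.norm_mem_spectrum_of_nonneg (a := CFC.abs a) (CFC.abs_nonneg a)
  obtain ⟨x, hx, y, hy, hyx, hnorm⟩ := exists_ne_zero_sq_mul_mul_eq_self
    (IsSelfAdjoint.of_nonneg (CFC.abs_nonneg a)) hspec hb (hba.trans_le (le_abs_self _))
  have hstar : star a * (a * y) = CFC.abs a ^ 2 * y := by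
    rw [← mul_assoc, ← CFC.abs_mul_abs, sq]
  have hcomm : Commute (CFC.abs a ^ 2 * y) (a * y) :=
    ((ha.symm.pow_left 2).mul_right ((hy _ (.refl _)).symm.pow_left 2)).mul_left
      ((hy a ha.symm).mul_right (.refl y))
  refine ⟨x, hx, a * y, by rwa [← norm_cfcAbs_mul], fun n => ?_⟩
  calc star a * ((a * y) ^ (n + 1) * x) = CFC.abs a ^ 2 * y * (a * y) ^ n * x := by
        rw [pow_succ', ← hstar]; simp only [mul_assoc]
    _ = (a * y) ^ n * (CFC.abs a ^ 2 * y * x) := by rw [(hcomm.pow_right n).eq, mul_assoc]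
    _ = (a * y) ^ n * x := by rw [hyx]

end CStarAlgebra

section HilbertSpace

variable {H : Type*} [NormedAddCommGroup H] [InnerProductSpace ℂ H]

lemma le_mval_of_algebraMap_le [Nontrivial H] {T : H →L[ℂ] H} {r : ℝ}
    (h : algebraMap ℝ (H →L[ℂ] H) r ≤ T) : r ≤ mval T := by
  obtain ⟨x₀, hx₀⟩ := exists_norm_eq H (zero_le_one' ℝ)
  refine le_csInf ⟨_, x₀, hx₀, rfl⟩ ?_
  rintro _ ⟨x, hx, rfl⟩
  have hpos := ((ContinuousLinearMap.le_def _ _).1 h).re_inner_nonneg_left x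
  have hr : (algebraMap ℝ (H →L[ℂ] H) r) x = (r : ℂ) • x := by
    simp [Algebra.algebraMap_eq_smul_one]
  rw [_root_.sub_apply, hr, inner_sub_left, map_sub, inner_smul_left,
    inner_self_eq_norm_sq_to_K, hx] at hpos
  simpa [ContinuousLinearMap.reApplyInnerSelf] using hpos

lemma mval_nonneg [Nontrivial H] {T : H →L[ℂ] H} (hT : 0 ≤ T) : 0 ≤ mval T :=
  le_mval_of_algebraMap_le (by simpa only [map_zero] using hT)

variable [CompleteSpace H]

lemma modulus_nonneg (T : H →L[ℂ] H) : 0 ≤ modulus T := CFC.abs_nonneg T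

lemma isQuasinormal_of_isStarNormal {T : H →L[ℂ] H} (hT : IsStarNormal T) : IsQuasinormal T :=
  (CFC.commute_abs_self T hT).symm

lemma exists_mem_spectrum_lt_of_mval_lt [Nontrivial H] {T : H →L[ℂ] H} (hT : IsSelfAdjoint T)
    {r : ℝ} (hr : mval T < r) : ∃ t ∈ spectrum ℝ T, t < r := by
  by_contra! h
  exact hr.not_ge (le_mval_of_algebraMap_le ((algebraMap_le_iff_le_spectrum hT).2 h))

lemma IsQuasinormal.exists_ne_zero_norm_pow_apply_le [Nontrivial H] {R : H →L[ℂ] H}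
    (hR : IsQuasinormal R) {r : ℝ} (hr : mval (modulus R) < r) :
    ∃ v ≠ 0, ∃ C, ∀ n : ℕ, ‖(R ^ n) v‖ ≤ C * r ^ n := by
  have hsa : IsSelfAdjoint (modulus R) := .of_nonneg (modulus_nonneg R)
  obtain ⟨t, ht, htr⟩ := exists_mem_spectrum_lt_of_mval_lt hsa hr
  have ht0 : 0 ≤ t := spectrum_nonneg_of_nonneg (modulus_nonneg R) ht
  obtain ⟨T, hT, hbound⟩ := exists_ne_zero_norm_pow_mul_le hsa ht (by rwa [abs_of_nonneg ht0])
  obtain ⟨w, hw⟩ := DFunLike.ne_iff.1 hT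
  refine ⟨T w, hw, r * ‖w‖, fun n => ?_⟩
  calc ‖(R ^ n) (T w)‖ ≤ ‖R ^ n * T‖ * ‖w‖ := (R ^ n * T).le_opNorm w
    _ = ‖modulus R ^ n * T‖ * ‖w‖ := by rw [← norm_cfcAbs_pow_mul hR]; rfl
    _ ≤ r ^ n * r * ‖w‖ := by gcongr; exact hbound n
    _ = r * ‖w‖ * r ^ n := by ring

lemma IsQuasinormal.exists_adjoint_apply_succ_eq {A : H →L[ℂ] H} (hA : IsQuasinormal A) {b : ℝ}
    (hb : 0 < b) (hbA : b < ‖A‖) :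
    ∃ u : ℕ → H, u 0 ≠ 0 ∧ (∀ n, adjoint A (u (n + 1)) = u n) ∧
      ∃ C, ∀ n, ‖u n‖ ≤ C * b⁻¹ ^ n := by
  obtain ⟨T, hT, G, hG, hstar⟩ := exists_ne_zero_star_mul_pow_succ_mul hA hb hbA
  obtain ⟨w, hw⟩ := DFunLike.ne_iff.1 hT
  refine ⟨fun n => (G ^ n) (T w), hw, fun n => DFunLike.congr_fun (hstar n) w, ‖T w‖,
    fun n => ?_⟩
  calc ‖(G ^ n) (T w)‖ ≤ ‖G ^ n‖ * ‖T w‖ := (G ^ n).le_opNorm _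
    _ ≤ b⁻¹ ^ n * ‖T w‖ := by
      have : Nontrivial H := nontrivial_of_ne _ _ hw
      gcongr
      exact (norm_pow_le G n).trans (by gcongr)
    _ = ‖T w‖ * b⁻¹ ^ n := mul_comm _ _

end HilbertSpace

section Intertwining

lemma exists_hasSum_apply_lp {𝕜 ι F : Type*} [NontriviallyNormedField 𝕜] {E : ι → Type*}
    [∀ i, NormedAddCommGroup (E i)] [∀ i, NormedSpace 𝕜 (E i)] [NormedAddCommGroup F]
    [NormedSpace 𝕜 F] [CompleteSpace F] {p : ENNReal} [Fact (1 ≤ p)] {T : ∀ i, E i →L[𝕜] F}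
    (hT : Summable fun i => ‖T i‖) :
    ∃ X : lp E p →L[𝕜] F, ∀ x, HasSum (fun i => T i (x i)) (X x) := by
  have hp : p ≠ 0 := (zero_lt_one.trans_le Fact.out).ne'
  have hnorm (i : ι) : ‖T i ∘L lp.evalCLM 𝕜 E p i‖ ≤ ‖T i‖ :=
    opNorm_le_bound _ (norm_nonneg _) fun x =>
      (T i).le_opNorm_of_le (lp.norm_apply_le_norm hp x i)
  have hsum : Summable fun i => T i ∘L lp.evalCLM 𝕜 E p i := .of_norm_bounded hT hnorm
  exact ⟨∑' i, T i ∘L lp.evalCLM 𝕜 E p i,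
    fun x => hsum.hasSum.mapL (ContinuousLinearMap.apply 𝕜 F x)⟩

variable {H 𝔏 : Type*} [NormedAddCommGroup H] [InnerProductSpace ℂ H] [CompleteSpace H]
  [NormedAddCommGroup 𝔏] [InnerProductSpace ℂ 𝔏]

lemma mem_intertwiningValues_of_summable {R : H →L[ℂ] H} {A : 𝔏 →L[ℂ] 𝔏}
    {AS : lp (fun _ : ℕ => 𝔏) 2 →L[ℂ] lp (fun _ : ℕ => 𝔏) 2}
    (hAS : ∀ x : lp (fun _ : ℕ => 𝔏) 2, (AS x) 0 = 0 ∧ ∀ n : ℕ, (AS x) (n + 1) = A (x n))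
    {L : ℕ → 𝔏 →L[ℂ] H} (hL0 : L 0 ≠ 0) (hL : ∀ n, L (n + 1) ∘L A = R ∘L L n)
    {l : ℂ} (hl : l ≠ 0) (hsum : Summable fun n => ‖l‖⁻¹ ^ n * ‖L n‖) :
    l ∈ intertwiningValues R AS := by
  obtain ⟨X, hX⟩ := exists_hasSum_apply_lp (p := 2) (T := fun n => l⁻¹ ^ n • L n)
    (by simpa only [norm_smul, norm_pow, norm_inv] using hsum)
  refine ⟨X, fun hX0 => hL0 ?_, ?_⟩
  · ext y
    have hsingle := (hX (lp.single 2 0 y)).unique <| hasSum_single 0 fun n hn => by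
      rw [lp.single_apply_ne _ _ _ hn, map_zero]
    simpa [hX0] using hsingle.symm
  · ext x
    have hshift (n : ℕ) : l • (l⁻¹ ^ (n + 1) • L (n + 1)) (AS x (n + 1)) =
        R ((l⁻¹ ^ n • L n) (x n)) := by
      rw [(hAS x).2, smul_apply, smul_apply, smul_smul, pow_succ',
        mul_inv_cancel_left₀ hl, map_smul]
      exact congrArg _ (DFunLike.congr_fun (hL n) (x n))
    have htail := (hasSum_nat_add_iff' 1).2 ((hX (AS x)).const_smul l)
    simp only [hshift, Finset.sum_range_one, (hAS x).1, map_zero, smul_zero, sub_zero] at htail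
    exact (R.hasSum (hX x)).unique htail

lemma summable_inv_pow_mul_norm_mul_norm {E F : Type*} [SeminormedAddCommGroup E]
    [SeminormedAddCommGroup F] {v : ℕ → E} {u : ℕ → F} {C D r b c : ℝ} (hr : 0 ≤ r) (hb : 0 < b)
    (hc : 0 < c) (hrbc : r < b * c) (hv : ∀ n, ‖v n‖ ≤ C * r ^ n)
    (hu : ∀ n, ‖u n‖ ≤ D * b⁻¹ ^ n) : Summable fun n => c⁻¹ ^ n * (‖v n‖ * ‖u n‖) := by
  have hgeom : Summable fun n : ℕ => C * D * (r / (b * c)) ^ n :=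
    (summable_geometric_of_lt_one (by positivity)
      ((div_lt_one (mul_pos hb hc)).2 hrbc)).mul_left _
  refine hgeom.of_nonneg_of_le (fun n => by positivity) fun n => ?_
  calc c⁻¹ ^ n * (‖v n‖ * ‖u n‖) ≤ c⁻¹ ^ n * ((C * r ^ n) * (D * b⁻¹ ^ n)) := by
        gcongr
        exacts [(norm_nonneg _).trans (hv n), hv n, hu n]
    _ = C * D * (r / (b * c)) ^ n := by
        rw [div_eq_mul_inv, mul_inv, mul_pow, mul_pow]
        ring

theorem mem_intertwiningValues_of_gt_general [CompleteSpace 𝔏] [Nontrivial H]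
    {R : H →L[ℂ] H} (hR : IsQuasinormal R) {A : 𝔏 →L[ℂ] 𝔏} (hA : IsQuasinormal A) (hA0 : A ≠ 0)
    {AS : lp (fun _ : ℕ => 𝔏) 2 →L[ℂ] lp (fun _ : ℕ => 𝔏) 2}
    (hAS : ∀ x : lp (fun _ : ℕ => 𝔏) 2, (AS x) 0 = 0 ∧ ∀ n : ℕ, (AS x) (n + 1) = A (x n))
    {l : ℂ} (hl : mval (modulus R) / ‖A‖ < ‖l‖) : l ∈ intertwiningValues R AS := by
  have hm : 0 ≤ mval (modulus R) := mval_nonneg (modulus_nonneg R)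
  have hlpos : 0 < ‖l‖ := (div_nonneg hm (norm_nonneg A)).trans_lt hl
  obtain ⟨b, hmb, hbA⟩ := exists_between ((div_lt_comm₀ (norm_pos_iff.2 hA0) hlpos).1 hl)
  have hb : 0 < b := (div_nonneg hm hlpos.le).trans_lt hmb
  obtain ⟨r, hmr, hrb⟩ := exists_between ((div_lt_iff₀ hlpos).1 hmb)
  obtain ⟨v, hv0, C, hv⟩ := hR.exists_ne_zero_norm_pow_apply_le hmr
  obtain ⟨u, hu0, hu, D, huD⟩ := hA.exists_adjoint_apply_succ_eq hb hbA
  let L (n : ℕ) : 𝔏 →L[ℂ] H := InnerProductSpace.rankOne ℂ ((R ^ n) v) (u n)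
  have hL (n : ℕ) : L (n + 1) ∘L A = R ∘L L n := by
    simp only [L, InnerProductSpace.rankOne_comp, InnerProductSpace.comp_rankOne, hu, pow_succ',
      mul_apply_eq_comp]
  have hsum : Summable fun n => ‖l‖⁻¹ ^ n * ‖L n‖ := by
    simpa only [L, InnerProductSpace.norm_rankOne] using
      summable_inv_pow_mul_norm_mul_norm (hm.trans hmr.le) hb hlpos hrb hv huD
  exact mem_intertwiningValues_of_summable hAS (InnerProductSpace.rankOne_ne_zero hv0 hu0) hL
    (norm_pos_iff.1 hlpos) hsum

end Intertwining

theorem mem_intertwiningValues_of_gt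
    {H 𝔏 : Type*} [NormedAddCommGroup H] [InnerProductSpace ℂ H] [CompleteSpace H] [NormedAddCommGroup 𝔏] [InnerProductSpace ℂ 𝔏] [CompleteSpace 𝔏] [Nontrivial H] [Nontrivial 𝔏]
    (R : H →L[ℂ] H) (hRinj : Function.Injective R) (hRqn : IsQuasinormal R)
    (A : 𝔏 →L[ℂ] 𝔏) (hAinj : Function.Injective A) (hApos : A.IsPositive)
    (AS : lp (fun _ : ℕ => 𝔏) 2 →L[ℂ] lp (fun _ : ℕ => 𝔏) 2)
    (hAS : ∀ x : lp (fun _ : ℕ => 𝔏) 2,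
      (AS x) 0 = 0 ∧ ∀ n : ℕ, (AS x) (n + 1) = A (x n)) :
    ∀ l : ℂ, mval (modulus R) / ‖A‖ < ‖l‖ → l ∈ intertwiningValues R AS := by
  have hA0 : A ≠ 0 := by
    rintro rfl
    obtain ⟨x, hx⟩ := exists_ne (0 : 𝔏)
    exact hx (hAinj rfl)
  exact fun l hl => mem_intertwiningValues_of_gt_general hRqn
    (isQuasinormal_of_isStarNormal hApos.isSelfAdjoint.isStarNormal) hA0 hAS hl
end

section
/- Let H and 𝔏 be complex Hilbert spaces, let R be an injective quasinormal bounded operator on H, and let A be an injective positive bounded operator on 𝔏. Then every complex number λ belonging to Λ_int(R, A⊗S) satisfies |λ|·‖A‖ ≥ m_{|R|}. -/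
open ContinuousLinearMap

/-!
An operator `R` is bounded below by `m = m_{|R|}`, because `‖|R|x‖ = ‖Rx‖` and
`m‖x‖² ≤ re ⟨|R|x, x⟩ ≤ ‖|R|x‖‖x‖`. Taking norms in `RX = λXM` therefore gives
`m‖X‖ ≤ ‖RX‖ ≤ |λ|‖X‖‖M‖`, and `‖X‖` cancels. It remains to bound `‖A ⊗ S‖` by `‖A‖`.
-/

section LowerBound

variable {H : Type*} [NormedAddCommGroup H] [InnerProductSpace ℂ H]

theorem mval_eq_sInf_image_rayleighQuotient_sphere (T : H →L[ℂ] H) :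
    mval T = sInf (T.rayleighQuotient '' Metric.sphere 0 1) := by
  unfold mval
  congr 1
  ext r
  refine exists_congr fun x ↦ ?_
  rw [mem_sphere_zero_iff_norm]
  refine and_congr_right fun hx ↦ ?_
  rw [rayleighQuotient, hx, one_pow, div_one, eq_comm]

theorem mval_le_rayleighQuotient (T : H →L[ℂ] H) {x : H} (hx : x ≠ 0) :
    mval T ≤ T.rayleighQuotient x := by
  rw [mval_eq_sInf_image_rayleighQuotient_sphere,
    ← T.image_rayleigh_eq_image_rayleigh_sphere one_pos]
  refine csInf_le ⟨-‖T‖, ?_⟩ (Set.mem_image_of_mem _ hx)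
  rintro _ ⟨y, -, rfl⟩
  exact neg_le_of_abs_le (T.rayleighQuotient_le_norm y)

theorem mval_mul_norm_le_norm_apply (T : H →L[ℂ] H) (x : H) : mval T * ‖x‖ ≤ ‖T x‖ := by
  obtain rfl | hx := eq_or_ne x 0
  · simp
  have hx_pos : 0 < ‖x‖ := norm_pos_iff.2 hx
  refine le_of_mul_le_mul_right ?_ hx_pos
  calc mval T * ‖x‖ * ‖x‖ = mval T * ‖x‖ ^ 2 := by ring
    _ ≤ T.reApplyInnerSelf x := (le_div_iff₀ (by positivity)).1 (mval_le_rayleighQuotient T hx)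
    _ ≤ ‖T x‖ * ‖x‖ := re_inner_le_norm (𝕜 := ℂ) (T x) x

variable [CompleteSpace H]

theorem adjoint_modulus_comp_modulus (T : H →L[ℂ] H) :
    adjoint (modulus T) ∘L modulus T = adjoint T ∘L T := by
  have h_selfAdjoint : adjoint (modulus T) = modulus T := (CFC.abs_nonneg T).isSelfAdjoint
  rw [h_selfAdjoint]
  exact CFC.abs_mul_abs T

theorem norm_modulus_apply (T : H →L[ℂ] H) (x : H) : ‖modulus T x‖ = ‖T x‖ := by
  rw [apply_norm_eq_sqrt_inner_adjoint_left, adjoint_modulus_comp_modulus,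
    ← apply_norm_eq_sqrt_inner_adjoint_left]

theorem mval_modulus_mul_norm_le_norm_apply (T : H →L[ℂ] H) (x : H) :
    mval (modulus T) * ‖x‖ ≤ ‖T x‖ :=
  (mval_mul_norm_le_norm_apply (modulus T) x).trans_eq (norm_modulus_apply T x)

end LowerBound

section Intertwining

theorem mul_opNorm_le_opNorm_comp {𝕜 E F G : Type*} [NontriviallyNormedField 𝕜]
    [SeminormedAddCommGroup E] [NormedSpace 𝕜 E] [SeminormedAddCommGroup F] [NormedSpace 𝕜 F]
    [SeminormedAddCommGroup G] [NormedSpace 𝕜 G] {R : F →L[𝕜] G} {c : ℝ}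
    (hR : ∀ y, c * ‖y‖ ≤ ‖R y‖) (X : E →L[𝕜] F) : c * ‖X‖ ≤ ‖R ∘L X‖ := by
  obtain hc | hc := le_or_gt c 0
  · exact (mul_nonpos_of_nonpos_of_nonneg hc (norm_nonneg X)).trans (norm_nonneg _)
  rw [← le_div_iff₀' hc]
  refine X.opNorm_le_bound (by positivity) fun x ↦ ?_
  rw [div_mul_eq_mul_div, le_div_iff₀' hc]
  exact (hR (X x)).trans ((R ∘L X).le_opNorm x)

theorem le_norm_mul_opNorm_of_mem_intertwiningValues {H K : Type*}
    [NormedAddCommGroup H] [InnerProductSpace ℂ H] [NormedAddCommGroup K] [InnerProductSpace ℂ K]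
    {R : H →L[ℂ] H} {M : K →L[ℂ] K} {c : ℝ} (hR : ∀ y, c * ‖y‖ ≤ ‖R y‖) {l : ℂ}
    (hl : l ∈ intertwiningValues R M) : c ≤ ‖l‖ * ‖M‖ := by
  obtain ⟨X, hX, hRX⟩ := hl
  refine le_of_mul_le_mul_right ?_ (norm_pos_iff.2 hX)
  calc c * ‖X‖ ≤ ‖R ∘L X‖ := mul_opNorm_le_opNorm_comp hR X
    _ = ‖l‖ * ‖X ∘L M‖ := by rw [hRX, norm_smul]
    _ ≤ ‖l‖ * (‖X‖ * ‖M‖) := by gcongr; exact X.opNorm_comp_le M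
    _ = ‖l‖ * ‖M‖ * ‖X‖ := by ring

end Intertwining

section Shift

open scoped ENNReal

theorem norm_lp_le_mul_of_norm_succ_le {E F : Type*} [NormedAddCommGroup E]
    [NormedAddCommGroup F] {p : ℝ≥0∞} (hp : p ≠ 0) {C : ℝ} (hC : 0 ≤ C)
    {x : lp (fun _ : ℕ ↦ E) p} {y : lp (fun _ : ℕ ↦ F) p} (hy_zero : y 0 = 0)
    (hy_succ : ∀ n, ‖y (n + 1)‖ ≤ C * ‖x n‖) : ‖y‖ ≤ C * ‖x‖ := by
  have hCx : 0 ≤ C * ‖x‖ := mul_nonneg hC (lp.norm_nonneg' x)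
  obtain rfl | rfl | hp_pos := p.trichotomy
  · exact absurd rfl hp
  · refine lp.norm_le_of_forall_le hCx fun n ↦ ?_
    cases n with
    | zero => rwa [hy_zero, norm_zero]
    | succ n =>
      exact (hy_succ n).trans (mul_le_mul_of_nonneg_left (lp.norm_apply_le_norm hp x n) hC)
  · have hy_sum : HasSum (fun n ↦ ‖y (n + 1)‖ ^ p.toReal) (‖y‖ ^ p.toReal) := by
      simpa [hy_zero, Real.zero_rpow hp_pos.ne'] using
        (hasSum_nat_add_iff' 1).2 (lp.hasSum_norm hp_pos y)
    have hx_sum : HasSum (fun n ↦ (C * ‖x n‖) ^ p.toReal) ((C * ‖x‖) ^ p.toReal) := by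
      simpa only [Real.mul_rpow hC, norm_nonneg, lp.norm_nonneg'] using
        (lp.hasSum_norm hp_pos x).mul_left (C ^ p.toReal)
    rw [← Real.rpow_le_rpow_iff (lp.norm_nonneg' y) hCx hp_pos]
    exact hasSum_le (fun n ↦ Real.rpow_le_rpow (norm_nonneg _) (hy_succ n) hp_pos.le)
      hy_sum hx_sum

theorem opNorm_tensorShift_le {𝕜 E F : Type*} [NontriviallyNormedField 𝕜]
    [NormedAddCommGroup E] [NormedSpace 𝕜 E] [NormedAddCommGroup F] [NormedSpace 𝕜 F]
    {p : ℝ≥0∞} [Fact (1 ≤ p)] {A : E →L[𝕜] F}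
    {AS : lp (fun _ : ℕ ↦ E) p →L[𝕜] lp (fun _ : ℕ ↦ F) p}
    (hAS : ∀ x, AS x 0 = 0 ∧ ∀ n, AS x (n + 1) = A (x n)) : ‖AS‖ ≤ ‖A‖ := by
  have hp : p ≠ 0 := (zero_lt_one.trans_le Fact.out).ne'
  refine AS.opNorm_le_bound (norm_nonneg A) fun x ↦ ?_
  refine norm_lp_le_mul_of_norm_succ_le hp (norm_nonneg A) (hAS x).1 fun n ↦ ?_
  rw [(hAS x).2]
  exact A.le_opNorm (x n)

end Shift

theorem intertwiningValues_norm_lower_bound_general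
    {H 𝔏 : Type*} [NormedAddCommGroup H] [InnerProductSpace ℂ H] [CompleteSpace H]
    [NormedAddCommGroup 𝔏] [InnerProductSpace ℂ 𝔏] (R : H →L[ℂ] H) (A : 𝔏 →L[ℂ] 𝔏)
    (AS : lp (fun _ : ℕ => 𝔏) 2 →L[ℂ] lp (fun _ : ℕ => 𝔏) 2)
    (hAS : ∀ x : lp (fun _ : ℕ => 𝔏) 2,
      (AS x) 0 = 0 ∧ ∀ n : ℕ, (AS x) (n + 1) = A (x n))
    {l : ℂ} (hl : l ∈ intertwiningValues R AS) : mval (modulus R) ≤ ‖l‖ * ‖A‖ :=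
  calc mval (modulus R) ≤ ‖l‖ * ‖AS‖ :=
        le_norm_mul_opNorm_of_mem_intertwiningValues (mval_modulus_mul_norm_le_norm_apply R) hl
    _ ≤ ‖l‖ * ‖A‖ := by gcongr; exact opNorm_tensorShift_le hAS

theorem intertwiningValues_norm_lower_bound
    {H 𝔏 : Type*} [NormedAddCommGroup H] [InnerProductSpace ℂ H] [CompleteSpace H] [NormedAddCommGroup 𝔏] [InnerProductSpace ℂ 𝔏] [CompleteSpace 𝔏]
    (R : H →L[ℂ] H) (hRinj : Function.Injective R) (hRqn : IsQuasinormal R)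
    (A : 𝔏 →L[ℂ] 𝔏) (hAinj : Function.Injective A) (hApos : A.IsPositive)
    (AS : lp (fun _ : ℕ => 𝔏) 2 →L[ℂ] lp (fun _ : ℕ => 𝔏) 2)
    (hAS : ∀ x : lp (fun _ : ℕ => 𝔏) 2,
      (AS x) 0 = 0 ∧ ∀ n : ℕ, (AS x) (n + 1) = A (x n)) :
    ∀ l : ℂ, l ∈ intertwiningValues R AS → mval (modulus R) ≤ ‖l‖ * ‖A‖ :=
  fun _ hl ↦ intertwiningValues_norm_lower_bound_general R A AS hAS hl
end

section
/- Let N be a normal bounded operator on a complex Hilbert space E and T a pure subnormal bounded operator on a complex Hilbert space F, and suppose the direct sum Z = N⊕T, acting on the Hilbert space direct sum E⊕F, is injective. Let λ ∈ ℂ and let X be a bounded operator on E⊕F satisfying Z∘X = λ·(X∘Z), with block matrix [[X₁,X₂],[X₃,X₄]] where X₁ : E → E, X₂ : F → E, X₃ : E → F and X₄ : F → F. Then X₃ = 0, N∘X₁ = λ·(X₁∘N), T∘X₄ = λ·(X₄∘T) and N∘X₂ = λ·(X₂∘T). -/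
open ContinuousLinearMap

/-!
The lower left block satisfies `T X₃ = X₃ (λN)`, where `λN` is normal. Composing with an isometry
into a space on which `T` extends to a normal operator and applying Fuglede–Putnam there gives
`T† X₃ = X₃ (λN)†`. Hence the closure of the range of `X₃` is a reducing subspace on which `T` is
normal, and purity of `T` makes it trivial.
-/

section DirectSum

variable {𝕜 E E' F F' : Type*} [RCLike 𝕜]
  [NormedAddCommGroup E] [InnerProductSpace 𝕜 E] [NormedAddCommGroup E'] [InnerProductSpace 𝕜 E']
  [NormedAddCommGroup F] [InnerProductSpace 𝕜 F] [NormedAddCommGroup F'] [InnerProductSpace 𝕜 F']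

/-- The orthogonal direct sum `A ⊕ B` of two bounded operators, acting between the Hilbert space
direct sums, which are encoded as `L²` products. -/
noncomputable def directSum (A : E →L[𝕜] E') (B : F →L[𝕜] F') :
    WithLp 2 (E × F) →L[𝕜] WithLp 2 (E' × F') :=
  (WithLp.prodContinuousLinearEquiv 2 𝕜 E' F').symm.toContinuousLinearMap ∘L
    A.prodMap B ∘L (WithLp.prodContinuousLinearEquiv 2 𝕜 E F).toContinuousLinearMap

@[simp]
lemma directSum_apply (A : E →L[𝕜] E') (B : F →L[𝕜] F') (v : WithLp 2 (E × F)) :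
    directSum A B v = WithLp.toLp 2 (A v.fst, B v.snd) :=
  rfl

lemma adjoint_directSum [CompleteSpace E] [CompleteSpace E'] [CompleteSpace F] [CompleteSpace F']
    (A : E →L[𝕜] E') (B : F →L[𝕜] F') :
    adjoint (directSum A B) = directSum (adjoint A) (adjoint B) := by
  refine ((eq_adjoint_iff _ _).2 fun v w => ?_).symm
  simp [adjoint_inner_left]

lemma isStarNormal_directSum [CompleteSpace E] [CompleteSpace F]
    {A : E →L[𝕜] E} {B : F →L[𝕜] F} (hA : IsStarNormal A) (hB : IsStarNormal B) :
    IsStarNormal (directSum A B) := by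
  refine ⟨ContinuousLinearMap.ext fun v => ?_⟩
  have hAv : adjoint A (A v.fst) = A (adjoint A v.fst) :=
    DFunLike.congr_fun hA.star_comm_self.eq v.fst
  have hBv : adjoint B (B v.snd) = B (adjoint B v.snd) :=
    DFunLike.congr_fun hB.star_comm_self.eq v.snd
  simp [star_eq_adjoint, adjoint_directSum, hAv, hBv]

end DirectSum

section InvariantSubspace

variable {R E F : Type*} [Semiring R] [TopologicalSpace R]
  [AddCommMonoid E] [Module R E] [TopologicalSpace E]
  [AddCommMonoid F] [Module R F] [TopologicalSpace F] [ContinuousAdd F] [ContinuousSMul R F]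

lemma topologicalClosure_range_mem_invtSubmodule {T : F →L[R] F} {A : E →L[R] E} {Y : E →L[R] F}
    (hY : T ∘L Y = Y ∘L A) :
    Y.range.topologicalClosure ∈ Module.End.invtSubmodule (T : F →ₗ[R] F) := by
  refine Submodule.topologicalClosure_mem_invtSubmodule ?_
  rintro _ ⟨x, rfl⟩
  exact ⟨A x, (DFunLike.congr_fun hY x).symm⟩

end InvariantSubspace

section Compression

variable {𝕜 F K : Type*} [RCLike 𝕜]
  [NormedAddCommGroup F] [InnerProductSpace 𝕜 F] [CompleteSpace F]
  [NormedAddCommGroup K] [InnerProductSpace 𝕜 K] [CompleteSpace K]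

lemma adjoint_eq_adjoint_comp_adjoint_comp_of_isometry {T : F →L[𝕜] F} {M : K →L[𝕜] K}
    {J : F →L[𝕜] K} (hJ_isometry : adjoint J ∘L J = 1) (hJ : M ∘L J = J ∘L T) :
    adjoint T = adjoint J ∘L adjoint M ∘L J :=
  calc adjoint T = adjoint T ∘L (adjoint J ∘L J) := by rw [hJ_isometry]; rfl
    _ = adjoint (J ∘L T) ∘L J := by rw [adjoint_comp, comp_assoc]
    _ = adjoint J ∘L adjoint M ∘L J := by rw [← hJ, adjoint_comp, comp_assoc]

end Compression

section Intertwining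

variable {E F K : Type*} [NormedAddCommGroup E] [InnerProductSpace ℂ E] [CompleteSpace E]
  [NormedAddCommGroup F] [InnerProductSpace ℂ F] [CompleteSpace F]
  [NormedAddCommGroup K] [InnerProductSpace ℂ K] [CompleteSpace K]

-- Berberian's trick: `Y`, placed in the lower left corner, commutes with `A ⊕ M`, so the
-- commutant form of Fuglede's theorem applies.
lemma adjoint_comp_eq_comp_adjoint_of_isStarNormal {A : E →L[ℂ] E} {M : K →L[ℂ] K} {Y : E →L[ℂ] K}
    (hA : IsStarNormal A) (hM : IsStarNormal M) (hY : M ∘L Y = Y ∘L A) :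
    adjoint M ∘L Y = Y ∘L adjoint A := by
  let corner : WithLp 2 (E × K) →L[ℂ] WithLp 2 (E × K) :=
    (WithLp.prodContinuousLinearEquiv 2 ℂ E K).symm.toContinuousLinearMap ∘L
      ContinuousLinearMap.inr ℂ E K ∘L Y ∘L WithLp.fstL 2 ℂ E K
  have hcorner : Commute (directSum A M) corner := by
    refine ContinuousLinearMap.ext fun v => ?_
    have hYv : M (Y v.fst) = Y (A v.fst) := DFunLike.congr_fun hY v.fst
    simp [corner, hYv]
  have hcorner_star := (isStarNormal_directSum hA hM).commute_star_left hcorner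
  ext x
  have hx := congrArg WithLp.snd (DFunLike.congr_fun hcorner_star.eq (WithLp.toLp 2 (x, 0)))
  simpa [corner, star_eq_adjoint, adjoint_directSum] using hx

lemma IsSubnormal.adjoint_comp_eq_comp_adjoint {T : F →L[ℂ] F} {A : E →L[ℂ] E} {Y : E →L[ℂ] F}
    (hT : IsSubnormal T) (hA : IsStarNormal A) (hY : T ∘L Y = Y ∘L A) :
    adjoint T ∘L Y = Y ∘L adjoint A := by
  obtain ⟨K, _, _, _, j, M, hM, hMj⟩ := hT
  let J := j.toContinuousLinearMap
  have hJ : M ∘L J = J ∘L T := ContinuousLinearMap.ext hMj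
  have hJ_isometry : adjoint J ∘L J = 1 := J.isometry_iff_adjoint_comp_self.1 j.isometry
  have hJY : M ∘L (J ∘L Y) = (J ∘L Y) ∘L A := by
    rw [← comp_assoc, hJ, comp_assoc, hY, comp_assoc]
  calc adjoint T ∘L Y = adjoint J ∘L (adjoint M ∘L (J ∘L Y)) := by
        rw [adjoint_eq_adjoint_comp_adjoint_comp_of_isometry hJ_isometry hJ]; rfl
    _ = adjoint J ∘L ((J ∘L Y) ∘L adjoint A) := by
        rw [adjoint_comp_eq_comp_adjoint_of_isStarNormal hA ⟨hM⟩ hJY]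
    _ = (adjoint J ∘L J) ∘L (Y ∘L adjoint A) := rfl
    _ = Y ∘L adjoint A := by rw [hJ_isometry]; rfl

lemma IsPure.eq_zero_of_comp_eq_comp {T : F →L[ℂ] F} {A : E →L[ℂ] E} {Y : E →L[ℂ] F}
    (hT : IsPure T) (hA : IsStarNormal A) (hY : T ∘L Y = Y ∘L A)
    (hY_adjoint : adjoint T ∘L Y = Y ∘L adjoint A) : Y = 0 := by
  have hnormal_range : T ∘L adjoint T ∘L Y = adjoint T ∘L T ∘L Y :=
    calc T ∘L adjoint T ∘L Y = Y ∘L (A ∘L adjoint A) := by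
          rw [hY_adjoint, ← comp_assoc, hY, comp_assoc]
      _ = Y ∘L (adjoint A ∘L A) := congrArg (Y ∘L ·) hA.star_comm_self.eq.symm
      _ = adjoint T ∘L T ∘L Y := by rw [hY, ← comp_assoc, ← hY_adjoint, comp_assoc]
  have hnormal : Y.range.topologicalClosure ≤
      (T ∘L adjoint T).toLinearMap.eqLocus (adjoint T ∘L T).toLinearMap := by
    refine Submodule.topologicalClosure_minimal _ ?_ (isClosed_eqLocus _ _)
    rintro _ ⟨x, rfl⟩
    exact DFunLike.congr_fun hnormal_range x
  have hbot : Y.range.topologicalClosure = ⊥ :=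
    hT _ (Submodule.isClosed_topologicalClosure _)
      (topologicalClosure_range_mem_invtSubmodule hY)
      (topologicalClosure_range_mem_invtSubmodule hY_adjoint) hnormal
  ext x
  have hx : Y x ∈ Y.range.topologicalClosure := Submodule.le_topologicalClosure _ ⟨x, rfl⟩
  simpa [hbot] using hx

end Intertwining

section Blocks

variable {𝕜 E F : Type*} [NormedField 𝕜] [NormedAddCommGroup E] [NormedSpace 𝕜 E]
  [NormedAddCommGroup F] [NormedSpace 𝕜 F] {p : ENNReal} [Fact (1 ≤ p)]

lemma comp_eq_smul_comp_of_blocks {N : E →L[𝕜] E} {T : F →L[𝕜] F}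
    {Z X : WithLp p (E × F) →L[𝕜] WithLp p (E × F)} {l : 𝕜}
    {X₁ : E →L[𝕜] E} {X₂ : F →L[𝕜] E} {X₃ : E →L[𝕜] F} {X₄ : F →L[𝕜] F}
    (hZ : ∀ (x : E) (y : F),
      Z ((WithLp.equiv p (E × F)).symm (x, y)) = (WithLp.equiv p (E × F)).symm (N x, T y))
    (hX : Z ∘L X = l • (X ∘L Z))
    (hblocks : ∀ (x : E) (y : F), X ((WithLp.equiv p (E × F)).symm (x, y)) =
      (WithLp.equiv p (E × F)).symm (X₁ x + X₂ y, X₃ x + X₄ y)) :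
    N ∘L X₁ = l • (X₁ ∘L N) ∧ N ∘L X₂ = l • (X₂ ∘L T) ∧
      T ∘L X₃ = l • (X₃ ∘L N) ∧ T ∘L X₄ = l • (X₄ ∘L T) := by
  have hcoord (x : E) (y : F) :
      (N (X₁ x + X₂ y), T (X₃ x + X₄ y)) =
        (l • (X₁ (N x) + X₂ (T y)), l • (X₃ (N x) + X₄ (T y))) := by
    have hxy := DFunLike.congr_fun hX ((WithLp.equiv p (E × F)).symm (x, y))
    rw [_root_.smul_apply, ContinuousLinearMap.comp_apply, ContinuousLinearMap.comp_apply,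
      hblocks, hZ, hZ, hblocks] at hxy
    exact congrArg (WithLp.equiv p (E × F)) hxy
  have hfst (x : E) (y : F) := congrArg Prod.fst (hcoord x y)
  have hsnd (x : E) (y : F) := congrArg Prod.snd (hcoord x y)
  refine ⟨?_, ?_, ?_, ?_⟩ <;> ext v
  · simpa using hfst v 0
  · simpa using hfst 0 v
  · simpa using hsnd v 0
  · simpa using hsnd 0 v

end Blocks

theorem block_structure_extended_eigenvector_subnormal_general
    {E F : Type*} [NormedAddCommGroup E] [InnerProductSpace ℂ E] [CompleteSpace E]
    [NormedAddCommGroup F] [InnerProductSpace ℂ F] [CompleteSpace F]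
    (N : E →L[ℂ] E) (hN : adjoint N ∘L N = N ∘L adjoint N)
    (T : F →L[ℂ] F) (hTsub : IsSubnormal.{_} T) (hTpure : IsPure T)
    (Z : WithLp 2 (E × F) →L[ℂ] WithLp 2 (E × F))
    (hZ : ∀ (x : E) (y : F),
      Z ((WithLp.equiv 2 (E × F)).symm (x, y)) = (WithLp.equiv 2 (E × F)).symm (N x, T y))
    (l : ℂ) (X : WithLp 2 (E × F) →L[ℂ] WithLp 2 (E × F))
    (hX : Z ∘L X = l • (X ∘L Z))
    (X₁ : E →L[ℂ] E) (X₂ : F →L[ℂ] E) (X₃ : E →L[ℂ] F) (X₄ : F →L[ℂ] F)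
    (hblocks : ∀ (x : E) (y : F), X ((WithLp.equiv 2 (E × F)).symm (x, y)) =
      (WithLp.equiv 2 (E × F)).symm (X₁ x + X₂ y, X₃ x + X₄ y)) :
    X₃ = 0 ∧ N ∘L X₁ = l • (X₁ ∘L N) ∧ T ∘L X₄ = l • (X₄ ∘L T) ∧
      N ∘L X₂ = l • (X₂ ∘L T) := by
  obtain ⟨hNX₁, hNX₂, hTX₃, hTX₄⟩ := comp_eq_smul_comp_of_blocks hZ hX hblocks
  have hlN : IsStarNormal (l • N) := .smul (ha := ⟨hN⟩) l N
  have hTX₃_smul : T ∘L X₃ = X₃ ∘L (l • N) := by rw [hTX₃, comp_smul]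
  have hX₃ : X₃ = 0 :=
    hTpure.eq_zero_of_comp_eq_comp hlN hTX₃_smul
      (hTsub.adjoint_comp_eq_comp_adjoint hlN hTX₃_smul)
  exact ⟨hX₃, hNX₁, hTX₄, hNX₂⟩

theorem block_structure_extended_eigenvector_subnormal
    {E F : Type*} [NormedAddCommGroup E] [InnerProductSpace ℂ E] [CompleteSpace E] [NormedAddCommGroup F] [InnerProductSpace ℂ F] [CompleteSpace F]
    (N : E →L[ℂ] E) (hN : adjoint N ∘L N = N ∘L adjoint N)
    (T : F →L[ℂ] F) (hTsub : IsSubnormal.{_} T) (hTpure : IsPure T)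
    (Z : WithLp 2 (E × F) →L[ℂ] WithLp 2 (E × F))
    (hZ : ∀ (x : E) (y : F),
      Z ((WithLp.equiv 2 (E × F)).symm (x, y)) = (WithLp.equiv 2 (E × F)).symm (N x, T y))
    (hZinj : Function.Injective Z)
    (l : ℂ) (X : WithLp 2 (E × F) →L[ℂ] WithLp 2 (E × F))
    (hX : Z ∘L X = l • (X ∘L Z))
    (X₁ : E →L[ℂ] E) (X₂ : F →L[ℂ] E) (X₃ : E →L[ℂ] F) (X₄ : F →L[ℂ] F)
    (hblocks : ∀ (x : E) (y : F),
      X ((WithLp.equiv 2 (E × F)).symm (x, y)) = (WithLp.equiv 2 (E × F)).symm (X₁ x + X₂ y, X₃ x + X₄ y)) :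
    X₃ = 0 ∧ N ∘L X₁ = l • (X₁ ∘L N) ∧ T ∘L X₄ = l • (X₄ ∘L T) ∧
      N ∘L X₂ = l • (X₂ ∘L T) :=
  block_structure_extended_eigenvector_subnormal_general N hN T hTsub hTpure Z hZ l X hX
    X₁ X₂ X₃ X₄ hblocks
end

section
/- Let 𝔏 be a complex Hilbert space, A an injective positive bounded operator on 𝔏, λ ∈ ℂ, and X a bounded operator on ℓ²(ℕ,𝔏) satisfying (A⊗S)∘X = λ·(X∘(A⊗S)). Then the matrix of X is lower triangular: for all i, j ∈ ℕ with i < j, the operator 𝔏 → 𝔏 sending x to (X(e_j ⊗ x))_i is zero, where e_j ⊗ x denotes the element of ℓ²(ℕ,𝔏) equal to x in position j and 0 in all other positions. -/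
open ContinuousLinearMap

/-!
Comparing matrix entries in `S X = λ X T`, where `S` and `T` are weighted shifts with weights `Bᵢ`
and `Aⱼ`, gives `λ X₀,ⱼ₊₁ Aⱼ = 0` and `λ Xᵢ₊₁,ⱼ₊₁ Aⱼ = Bᵢ Xᵢⱼ`. If `λ ≠ 0` and every `Aⱼ` has dense
range, the first relation gives `X₀ⱼ = 0` for `j > 0` and the second propagates this down the
diagonals. If `λ = 0` and every `Bᵢ` is injective, then so is `S`, hence `X = 0`. An injective
positive operator is a weight of both kinds, because the orthogonal complement of its range is its
kernel.
-/

open Function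
open scoped ENNReal

theorem denseRange_of_isStarNormal_of_injective {𝕜 H : Type*} [RCLike 𝕜] [NormedAddCommGroup H]
    [InnerProductSpace 𝕜 H] [CompleteSpace H] {A : H →L[𝕜] H} (hA : IsStarNormal A)
    (hinj : Injective A) : DenseRange A := by
  have hrange : A.rangeᗮ = ⊥ := by
    rw [IsStarNormal.orthogonal_range hA]
    exact LinearMap.ker_eq_bot.mpr hinj
  exact Submodule.dense_iff_topologicalClosure_eq_top.mpr
    (Submodule.topologicalClosure_eq_top_iff.mpr hrange)

theorem eq_zero_of_comp_eq_zero_of_denseRange {𝕜 E F G : Type*} [Semiring 𝕜]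
    [TopologicalSpace E] [AddCommMonoid E] [Module 𝕜 E]
    [TopologicalSpace F] [AddCommMonoid F] [Module 𝕜 F]
    [TopologicalSpace G] [AddCommMonoid G] [Module 𝕜 G] [T2Space G]
    {f : F →L[𝕜] G} {A : E →L[𝕜] F} (hA : DenseRange A) (h : f ∘L A = 0) : f = 0 :=
  DFunLike.coe_injective <|
    hA.equalizer f.continuous continuous_const (congrArg DFunLike.coe h)

section MatrixEntry

variable {𝕜 ι κ : Type*} [NormedRing 𝕜] {E : ι → Type*} {F : κ → Type*}
  [∀ i, NormedAddCommGroup (E i)] [∀ i, Module 𝕜 (E i)] [∀ i, IsBoundedSMul 𝕜 (E i)]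
  [∀ i, NormedAddCommGroup (F i)] [∀ i, Module 𝕜 (F i)] [∀ i, IsBoundedSMul 𝕜 (F i)]
  {p q : ℝ≥0∞} [Fact (1 ≤ p)] [Fact (1 ≤ q)]

/-- The `(i, j)` entry of the operator matrix of a bounded operator between `ℓᵖ` direct sums. -/
noncomputable def matrixEntry [DecidableEq ι] (X : lp E p →L[𝕜] lp F q) (i : κ) (j : ι) :
    E j →L[𝕜] F i :=
  lp.evalCLM 𝕜 F q i ∘L X ∘L lp.singleContinuousLinearMap 𝕜 E p j

@[simp]
theorem matrixEntry_apply [DecidableEq ι] (X : lp E p →L[𝕜] lp F q) (i : κ) (j : ι) (x : E j) :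
    matrixEntry X i j x = X (lp.single p j x) i :=
  rfl

end MatrixEntry

section WeightedShift

variable {𝕜 : Type*} {E F : ℕ → Type*}
  [∀ n, NormedAddCommGroup (E n)] [∀ n, NormedAddCommGroup (F n)] {p q : ℝ≥0∞}

section NormedRing

variable [NormedRing 𝕜] [∀ n, Module 𝕜 (E n)] [∀ n, IsBoundedSMul 𝕜 (E n)]
  [∀ n, Module 𝕜 (F n)] [∀ n, IsBoundedSMul 𝕜 (F n)] [Fact (1 ≤ p)] [Fact (1 ≤ q)]

/-- `T` is the unilateral operator-weighted shift with weights `A n : E n → E (n + 1)`. For a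
constant weight `A` on a Hilbert space and `p = 2` this is the operator `A ⊗ S`. -/
structure IsWeightedShift (A : ∀ n, E n →L[𝕜] E (n + 1)) (T : lp E p →L[𝕜] lp E p) : Prop where
  apply_zero (x : lp E p) : T x 0 = 0
  apply_succ (x : lp E p) (n : ℕ) : T x (n + 1) = A n (x n)

namespace IsWeightedShift

variable {A : ∀ n, E n →L[𝕜] E (n + 1)} {T : lp E p →L[𝕜] lp E p}

theorem injective (hT : IsWeightedShift A T) (hA : ∀ n, Injective (A n)) : Injective T := by
  intro x y hxy
  ext n
  apply hA n
  rw [← hT.apply_succ, ← hT.apply_succ, hxy]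

theorem eq_zero_of_comp_eq_zero {M : Type*} [TopologicalSpace M] [AddCommMonoid M] [Module 𝕜 M]
    {X : M →L[𝕜] lp E p} (hT : IsWeightedShift A T) (hA : ∀ n, Injective (A n))
    (hX : T ∘L X = 0) : X = 0 := by
  ext1 x
  apply hT.injective hA
  simpa using DFunLike.congr_fun hX x

theorem apply_single (hT : IsWeightedShift A T) (j : ℕ) (x : E j) :
    T (lp.single p j x) = lp.single p (j + 1) (A j x) := by
  ext (_ | n)
  · rw [hT.apply_zero, lp.single_apply_ne p _ _ (Nat.succ_ne_zero j).symm]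
  · rw [hT.apply_succ]
    rcases eq_or_ne n j with rfl | hn
    · rw [lp.single_apply_self, lp.single_apply_self]
    · rw [lp.single_apply_ne p _ _ hn, map_zero,
        lp.single_apply_ne p _ _ (Nat.succ_injective.ne hn)]

theorem matrixEntry_comp_right (hT : IsWeightedShift A T) (X : lp E p →L[𝕜] lp F q) (i j : ℕ) :
    matrixEntry (X ∘L T) i j = matrixEntry X i (j + 1) ∘L A j := by
  ext x
  simp [hT.apply_single]

theorem matrixEntry_comp_left_zero (hT : IsWeightedShift A T) (X : lp F q →L[𝕜] lp E p) (j : ℕ) :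
    matrixEntry (T ∘L X) 0 j = 0 := by
  ext x
  exact hT.apply_zero _

theorem matrixEntry_comp_left_succ (hT : IsWeightedShift A T) (X : lp F q →L[𝕜] lp E p)
    (i j : ℕ) : matrixEntry (T ∘L X) (i + 1) j = A i ∘L matrixEntry X i j := by
  ext x
  exact hT.apply_succ _ i

end IsWeightedShift

end NormedRing

section NormedField

variable [NormedField 𝕜] [∀ n, NormedSpace 𝕜 (E n)] [∀ n, NormedSpace 𝕜 (F n)]
  [Fact (1 ≤ p)] [Fact (1 ≤ q)]
  {A : ∀ n, E n →L[𝕜] E (n + 1)} {B : ∀ n, F n →L[𝕜] F (n + 1)}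
  {T : lp E p →L[𝕜] lp E p} {S : lp F q →L[𝕜] lp F q} {X : lp E p →L[𝕜] lp F q} {l : 𝕜}

theorem matrixEntry_succ_eq_zero_of_intertwines (hT : IsWeightedShift A T) {i j : ℕ}
    (hA : DenseRange (A j)) (hl : l ≠ 0) (hX : S ∘L X = l • (X ∘L T))
    (hij : matrixEntry (S ∘L X) i j = 0) : matrixEntry X i (j + 1) = 0 := by
  have hsmul : l • matrixEntry (X ∘L T) i j = 0 := by
    rw [← hij, hX]
    rfl
  apply eq_zero_of_comp_eq_zero_of_denseRange hA
  rw [← hT.matrixEntry_comp_right]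
  exact (smul_eq_zero.mp hsmul).resolve_left hl

theorem matrixEntry_eq_zero_of_intertwines_of_ne_zero (hT : IsWeightedShift A T)
    (hS : IsWeightedShift B S) (hA : ∀ n, DenseRange (A n)) (hl : l ≠ 0)
    (hX : S ∘L X = l • (X ∘L T)) {i j : ℕ} (hij : i < j) : matrixEntry X i j = 0 := by
  induction i generalizing j with
  | zero =>
    obtain ⟨j, rfl⟩ := Nat.exists_eq_add_one_of_ne_zero hij.ne'
    exact matrixEntry_succ_eq_zero_of_intertwines hT (hA j) hl hX
      (hS.matrixEntry_comp_left_zero X j)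
  | succ i ih =>
    obtain ⟨j, rfl⟩ := Nat.exists_eq_add_one_of_ne_zero (Nat.ne_zero_of_lt hij)
    apply matrixEntry_succ_eq_zero_of_intertwines hT (hA j) hl hX
    rw [hS.matrixEntry_comp_left_succ, ih (Nat.lt_of_succ_lt_succ hij), comp_zero]

theorem lower_triangular_of_extended_eigenvector_general (hT : IsWeightedShift A T)
    (hS : IsWeightedShift B S) (hA : ∀ n, DenseRange (A n)) (hB : ∀ n, Injective (B n))
    (hX : S ∘L X = l • (X ∘L T)) (i j : ℕ) (hij : i < j) (x : E j) :
    X (lp.single p j x) i = 0 := by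
  rcases eq_or_ne l 0 with rfl | hl
  · rw [zero_smul] at hX
    rw [hS.eq_zero_of_comp_eq_zero hB hX]
    rfl
  · exact DFunLike.congr_fun (matrixEntry_eq_zero_of_intertwines_of_ne_zero hT hS hA hl hX hij) x

end NormedField

end WeightedShift

theorem lower_triangular_of_extended_eigenvector
    {𝔏 : Type*} [NormedAddCommGroup 𝔏] [InnerProductSpace ℂ 𝔏] [CompleteSpace 𝔏]
    (A : 𝔏 →L[ℂ] 𝔏) (hAinj : Function.Injective A) (hApos : A.IsPositive)
    (AS : lp (fun _ : ℕ => 𝔏) 2 →L[ℂ] lp (fun _ : ℕ => 𝔏) 2)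
    (hAS : ∀ x : lp (fun _ : ℕ => 𝔏) 2,
      (AS x) 0 = 0 ∧ ∀ n : ℕ, (AS x) (n + 1) = A (x n))
    (l : ℂ) (X : lp (fun _ : ℕ => 𝔏) 2 →L[ℂ] lp (fun _ : ℕ => 𝔏) 2)
    (hX : AS ∘L X = l • (X ∘L AS)) :
    ∀ i j : ℕ, i < j → ∀ x : 𝔏, (X (lp.single 2 j x)) i = 0 := by
  have hshift : IsWeightedShift (fun _ => A) AS := ⟨fun x => (hAS x).1, fun x => (hAS x).2⟩
  have hdense : DenseRange A :=
    denseRange_of_isStarNormal_of_injective hApos.isSelfAdjoint.isStarNormal hAinj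
  exact lower_triangular_of_extended_eigenvector_general hshift hshift (fun _ => hdense)
    (fun _ => hAinj) hX
end
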